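/- arXiv:1904.07007 — 2 statements merged into one kernel-verified Lean document; each statement's English description precedes it below -/
import Mathlib

section
/- Let β ∈ (1,2) with δ(β) = (1^m 0)^∞ for some m ≥ 1, and let [t_L, t_R) ⊂ [0, 1 − 1/β) be a β-Lyndon interval. Then the subshift K̃_β(t_R) is transitive: for every finite word ε that occurs as a prefix of some element of K̃_β(t_R) and every γ ∈ K̃_β(t_R), there exists a finite word ν such that the concatenation ε ν γ belongs to K̃_β(t_R). -/
open Set Filter MeasureTheory

/-- The β-transformation `x ↦ βx (mod 1)`. -/
noncomputable def Tbeta (β x : ℝ) : ℝ := Int.fract (β * x)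

/-- The survivor set `K_β(t) = {x ∈ [0,1) : T_β^n x ≥ t for all n ≥ 0}`. -/
def Kset (β t : ℝ) : Set ℝ := {x | x ∈ Set.Ico (0 : ℝ) 1 ∧ ∀ n : ℕ, t ≤ (Tbeta β)^[n] x}

/-- Strict lexicographic order on sequences of naturals. -/
def seqLt (x y : ℕ → ℕ) : Prop := ∃ n, (∀ i, i < n → x i = y i) ∧ x n < y n

/-- Lexicographic order on sequences of naturals. -/
def seqLe (x y : ℕ → ℕ) : Prop := x = y ∨ seqLt x y

/-- The `n`-th iterate of the left shift. -/
def shiftN (n : ℕ) (x : ℕ → ℕ) : ℕ → ℕ := fun i => x (i + n)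

/-- The sequence `w 0^∞`. -/
def wordSeq (w : List ℕ) : ℕ → ℕ := fun i => w.getD i 0

/-- The periodic sequence `w^∞`. -/
def perSeq (w : List ℕ) : ℕ → ℕ := fun i => w.getD (i % w.length) 0

/-- The sequence obtained by concatenating the word `w` with the sequence `x`. -/
def catSeq (w : List ℕ) (x : ℕ → ℕ) : ℕ → ℕ :=
  fun i => if i < w.length then w.getD i 0 else x (i - w.length)

/-- The greedy β-expansion of `t`: the digit `b_{i+1}` is `⌊β T_β^i t⌋`. -/
noncomputable def greedy (β t : ℝ) : ℕ → ℕ := fun i => (⌊β * (Tbeta β)^[i] t⌋).toNat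

/-- `d` is the quasi-greedy β-expansion of `1`: the lexicographically largest
sequence in `{0,1}^ℕ` not ending in `0^∞` whose digits sum to `1` in base `β`. -/
def IsQuasiGreedy (β : ℝ) (d : ℕ → ℕ) : Prop :=
  (∀ i, d i ≤ 1) ∧ (¬ ∃ N, ∀ n, N ≤ n → d n = 0) ∧
  (∑' i : ℕ, (d i : ℝ) / β ^ (i + 1) = 1) ∧
  ∀ e : ℕ → ℕ, (∀ i, e i ≤ 1) → (¬ ∃ N, ∀ n, N ≤ n → e n = 0) →
    (∑' i : ℕ, (e i : ℝ) / β ^ (i + 1) = 1) → seqLe e d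

/-- `s = s_1…s_p` is a β-Lyndon word: `s_{i+1}…s_p ≻ s_1…s_{p-i}` for `1 ≤ i < p`
and `σ^n(s^∞) ≺ δ(β)` for all `n ≥ 0`. -/
def IsBetaLyndon (β : ℝ) (s : List ℕ) : Prop :=
  s ≠ [] ∧ (∀ a ∈ s, a ≤ 1) ∧
  (∀ i, 1 ≤ i → i < s.length →
    seqLt (wordSeq (s.take (s.length - i))) (wordSeq (s.drop i))) ∧
  (∀ d : ℕ → ℕ, IsQuasiGreedy β d → ∀ n : ℕ, seqLt (shiftN n (perSeq s)) d)

/-- Left endpoint `t_L = Σ_{i=1}^p s_i β^{-i}` of the β-Lyndon interval generated by `s`. -/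
noncomputable def lyndonLeft (β : ℝ) (s : List ℕ) : ℝ :=
  ∑ i ∈ Finset.range s.length, (s.getD i 0 : ℝ) / β ^ (i + 1)

/-- Right endpoint `t_R = (β^p/(β^p - 1)) t_L` of the β-Lyndon interval generated by `s`. -/
noncomputable def lyndonRight (β : ℝ) (s : List ℕ) : ℝ :=
  β ^ s.length / (β ^ s.length - 1) * lyndonLeft β s

/-- The union of all β-Lyndon intervals `[t_L, t_R)`. -/
noncomputable def lyndonUnionIco (β : ℝ) : Set ℝ :=
  ⋃ s ∈ {s : List ℕ | IsBetaLyndon β s}, Set.Ico (lyndonLeft β s) (lyndonRight β s)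

/-- The symbolic survivor set `K̃_β(t)` with upper bound sequence `d = δ(β)`. -/
def Ktilde (β t : ℝ) (d : ℕ → ℕ) : Set (ℕ → ℕ) :=
  {x | (∀ i, x i ≤ 1) ∧ ∀ n : ℕ, seqLe (greedy β t) (shiftN n x) ∧ seqLe (shiftN n x) d}

/-- The set-valued bifurcation set `E_β`. -/
def Eset (β : ℝ) : Set ℝ :=
  {t | t ∈ Set.Ico (0 : ℝ) 1 ∧ ∀ t', t < t' → t' < 1 → Kset β t' ≠ Kset β t}

/-- The dimension bifurcation set `B_β`. -/
def Bset (β : ℝ) : Set ℝ :=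
  {t | t ∈ Set.Ico (0 : ℝ) 1 ∧ ∀ t', t < t' → t' < 1 → dimH (Kset β t') ≠ dimH (Kset β t)}

/-- `β` is a multinacci number: `β^{m+1} = β^m + ⋯ + β + 1` for some `m ≥ 1`. -/
def IsMultinacci (β : ℝ) : Prop :=
  ∃ m : ℕ, 1 ≤ m ∧ β ^ (m + 1) = ∑ i ∈ Finset.range (m + 1), β ^ i


lemma aux_delta (m i : ℕ) :
    perSeq (List.replicate m 1 ++ [0]) i = if i % (m+1) = m then 0 else 1 := by
  have h : i % (m+1) < m+1 := Nat.mod_lt _ (by omega)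
  unfold perSeq
  simp only [List.length_append, List.length_replicate, List.length_singleton]
  generalize i % (m+1) = r at *
  split_ifs with h1
  · subst h1; simp [List.getD_eq_getElem?_getD]
  · have : r < m := by omega
    simp [List.getD_eq_getElem?_getD, List.getElem?_append, this]

lemma aux_window (m : ℕ) (y : ℕ → ℕ) (n : ℕ)
    (h : seqLe (shiftN n y) (perSeq (List.replicate m 1 ++ [0]))) :
    ∃ i, i ≤ m ∧ y (n+i) = 0 := by
  have hm : perSeq (List.replicate m 1 ++ [0]) m = 0 := by
    rw [aux_delta]; simp
  rcases h with h | ⟨k, h1, h2⟩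
  · refine ⟨m, le_rfl, ?_⟩
    have := congrFun h m
    rw [hm] at this
    rw [add_comm]; exact this
  · by_cases hk : k ≤ m
    · refine ⟨k, hk, ?_⟩
      have : perSeq (List.replicate m 1 ++ [0]) k ≤ 1 := by
        rw [aux_delta]; split_ifs <;> omega
      have h3 : y (k+n) < perSeq (List.replicate m 1 ++ [0]) k := h2
      rw [add_comm]; omega
    · refine ⟨m, le_rfl, ?_⟩
      have := h1 m (by omega)
      rw [hm] at this
      rw [add_comm]; exact this

lemma aux_window_conv (m : ℕ) (y : ℕ → ℕ) (n : ℕ) (hy : ∀ i, y i ≤ 1)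
    (h : ∀ n, ∃ i, i ≤ m ∧ y (n+i) = 0) :
    seqLe (shiftN n y) (perSeq (List.replicate m 1 ++ [0])) := by
  by_cases he : shiftN n y = perSeq (List.replicate m 1 ++ [0])
  · exact Or.inl he
  right
  have hex : ∃ k, shiftN n y k ≠ perSeq (List.replicate m 1 ++ [0]) k := by
    by_contra hc
    push Not at hc
    exact he (funext hc)
  classical
  refine ⟨Nat.find hex, fun i hi => by_contra fun hc => Nat.find_min hex hi hc, ?_⟩
  have h1 := Nat.find_spec hex
  have h2 : ∀ i, i < Nat.find hex → shiftN n y i = perSeq (List.replicate m 1 ++ [0]) i :=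
    fun i hi => by_contra fun hc => Nat.find_min hex hi hc
  generalize Nat.find hex = k at *
  by_contra hc
  have hk1 : y (k+n) ≤ 1 := hy _
  have hk2 : shiftN n y k = y (k+n) := rfl
  rw [hk2, aux_delta] at h1 hc
  split_ifs at h1 hc with h3
  · have hk : m ≤ k := by rw [← h3]; exact Nat.mod_le _ _
    obtain ⟨i, hi, hz⟩ := h (n + (k-m))
    rcases Nat.lt_or_ge i m with him | him
    · have h4 := h2 (k-m+i) (by omega)
      rw [aux_delta] at h4
      have h5 : (k-m+i) % (m+1) = i := by
        have := Nat.div_add_mod k (m+1)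
        rw [h3] at this
        have h6 : k - m + i = i + (m+1) * (k/(m+1)) := by omega
        rw [h6, Nat.add_mul_mod_self_left, Nat.mod_eq_of_lt (by omega)]
      rw [h5, if_neg (by omega)] at h4
      have h7 : y (k-m+i+n) = 1 := h4
      have h8 : n + (k-m) + i = k-m+i+n := by omega
      rw [h8] at hz; omega
    · have h8 : n + (k-m) + i = k+n := by omega
      rw [h8] at hz; omega
  · omega

noncomputable def auxV (β : ℝ) (c : ℕ → ℕ) : ℝ := ∑' i : ℕ, (c i : ℝ) / β ^ (i + 1)

lemma auxV_summable {β : ℝ} (hβ : 1 < β) {c : ℕ → ℕ} (hc : ∀ i, c i ≤ 1) :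
    Summable (fun i : ℕ => (c i : ℝ) / β ^ (i + 1)) := by
  have h0 : 0 < β := by linarith
  have hg : Summable (fun i : ℕ => (1/β)^i * (1/β)) :=
    (summable_geometric_of_lt_one (by positivity) (by rw [div_lt_one h0]; exact hβ)).mul_right _
  refine Summable.of_nonneg_of_le (fun i => by positivity) (fun i => ?_) hg
  rw [← pow_succ, one_div, inv_pow, ← one_div]
  have : (c i : ℝ) ≤ 1 := by exact_mod_cast hc i
  gcongr

lemma auxV_split {β : ℝ} (hβ : 1 < β) {c : ℕ → ℕ} (hc : ∀ i, c i ≤ 1) (n : ℕ) :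
    auxV β c = ∑ i ∈ Finset.range n, (c i : ℝ) / β ^ (i + 1) + auxV β (shiftN n c) / β ^ n := by
  have h0 : 0 < β := by linarith
  unfold auxV
  rw [← (auxV_summable hβ hc).sum_add_tsum_nat_add n, ← tsum_div_const]
  congr 2
  funext i
  unfold shiftN
  rw [div_div, ← pow_add]
  congr 2
  omega

lemma auxV_nonneg {β : ℝ} (hβ : 1 < β) (c : ℕ → ℕ) : 0 ≤ auxV β c := by
  have h0 : 0 < β := by linarith
  exact tsum_nonneg (fun i => by positivity)

lemma auxV_pos {β : ℝ} (hβ : 1 < β) {c : ℕ → ℕ} (hc : ∀ i, c i ≤ 1) (k : ℕ) (hk : c k ≠ 0) :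
    0 < auxV β c := by
  have h0 : 0 < β := by linarith
  refine (auxV_summable hβ hc).tsum_pos (fun i => by positivity) k ?_
  have : 0 < (c k : ℝ) := by exact_mod_cast Nat.pos_of_ne_zero hk
  positivity

lemma aux_shift_shift (a b : ℕ) (c : ℕ → ℕ) : shiftN a (shiftN b c) = shiftN (a+b) c := by
  funext i; simp [shiftN, add_assoc]

lemma aux_per_shift (s : List ℕ) (n : ℕ) :
    shiftN n (perSeq s) = shiftN (n % s.length) (perSeq s) := by
  funext i; simp [shiftN, perSeq]

lemma aux_per_le (s : List ℕ) (hs : ∀ a ∈ s, a ≤ 1) (i : ℕ) : perSeq s i ≤ 1 := by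
  unfold perSeq
  rw [List.getD_eq_getElem?_getD]
  rcases lt_or_ge (i % s.length) s.length with h | h
  · simp [h]; exact hs _ (List.getElem_mem h)
  · simp [h]

lemma aux_right {β : ℝ} (hβ : 1 < β) (s : List ℕ) (hne : s ≠ []) (hs : ∀ a ∈ s, a ≤ 1) :
    lyndonRight β s = auxV β (perSeq s) := by
  have h0 : 0 < β := by linarith
  have h := auxV_split hβ (aux_per_le s hs) s.length
  rw [aux_per_shift, Nat.mod_self] at h
  have h2 : shiftN 0 (perSeq s) = perSeq s := rfl
  have h3 : ∑ i ∈ Finset.range s.length, (perSeq s i : ℝ) / β ^ (i + 1) = lyndonLeft β s := by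
    unfold lyndonLeft
    refine Finset.sum_congr rfl fun i hi => ?_
    rw [perSeq, Nat.mod_eq_of_lt (Finset.mem_range.1 hi)]
  rw [h2, h3] at h
  have hp : 1 < β ^ s.length := one_lt_pow₀ hβ (by simpa using hne)
  unfold lyndonRight
  have h4 : lyndonLeft β s = auxV β (perSeq s) - auxV β (perSeq s) / β ^ s.length := by linarith
  have h5 : β ^ s.length - 1 ≠ 0 := by linarith
  rw [h4]
  field_simp

/-- all tails of the periodic sequence have value below one -/
lemma aux_lt_one {β : ℝ} (hβ : 1 < β) (d : ℕ → ℕ) (hd : IsQuasiGreedy β d)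
    (s : List ℕ) (hne : s ≠ []) (hs : ∀ a ∈ s, a ≤ 1)
    (hlt : ∀ n, seqLt (shiftN n (perSeq s)) d) (k : ℕ) :
    auxV β (shiftN k (perSeq s)) < 1 := by
  have h0 : 0 < β := by linarith
  have hp : 0 < s.length := List.length_pos_iff.2 hne
  obtain ⟨i0, -, hi0⟩ := Finset.exists_max_image (Finset.range s.length)
    (fun i => auxV β (shiftN i (perSeq s))) ⟨0, by simpa using hp⟩
  have hmax : ∀ k, auxV β (shiftN k (perSeq s)) ≤ auxV β (shiftN i0 (perSeq s)) := by
    intro k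
    rw [aux_per_shift]
    exact hi0 _ (by simpa using Nat.mod_lt _ hp)
  refine lt_of_le_of_lt (hmax k) ?_
  obtain ⟨hd1, hd2, hd3, -⟩ := hd
  obtain ⟨n, hn1, hn2⟩ := hlt i0
  have hc1 : ∀ i, shiftN i0 (perSeq s) i ≤ 1 := fun i => aux_per_le s hs _
  have e1 := auxV_split hβ hc1 (n+1)
  have e2 := auxV_split hβ hd1 (n+1)
  have hV1 : auxV β d = 1 := hd3
  rw [aux_shift_shift] at e1
  rw [Finset.sum_range_succ] at e1 e2
  have hz : shiftN i0 (perSeq s) n = 0 := by have := hd1 n; omega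
  have ho : d n = 1 := by have := hd1 n; omega
  rw [Finset.sum_congr rfl (fun i hi => by rw [hn1 i (Finset.mem_range.1 hi)]), hz] at e1
  rw [ho, hV1] at e2
  have hpos : 0 < auxV β (shiftN (n+1) d) := by
    push Not at hd2
    obtain ⟨q, hq1, hq2⟩ := hd2 (n+1)
    refine auxV_pos hβ (fun i => hd1 _) (q-(n+1)) ?_
    unfold shiftN
    rwa [Nat.sub_add_cancel hq1]
  have hb : 1 < β ^ (n+1) := one_lt_pow₀ hβ (by omega)
  have hb0 : 0 < β ^ (n+1) := by linarith
  have hpos' : 0 < auxV β (shiftN (n+1) d) / β ^ (n+1) := by positivity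
  have hM : auxV β (shiftN (n+1+i0) (perSeq s)) / β ^ (n+1) ≤
      auxV β (shiftN i0 (perSeq s)) / β ^ (n+1) := by
    gcongr; exact hmax _
  by_contra hge
  push Not at hge
  set M := auxV β (shiftN i0 (perSeq s))
  push_cast at e1 e2
  have h6 : M - 1 < (M - 1) / β ^ (n+1) := by
    rw [sub_div]; simp only [zero_div] at e1; linarith
  have h7 : (M - 1) / β ^ (n+1) ≤ M - 1 := div_le_self (by linarith) hb.le
  linarith

lemma aux_greedy {β : ℝ} (hβ : 1 < β) (d : ℕ → ℕ) (hd : IsQuasiGreedy β d)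
    (s : List ℕ) (hne : s ≠ []) (hs : ∀ a ∈ s, a ≤ 1)
    (hlt : ∀ n, seqLt (shiftN n (perSeq s)) d) :
    greedy β (lyndonRight β s) = perSeq s := by
  have h0 : 0 < β := by linarith
  rw [aux_right hβ s hne hs]
  have step : ∀ k, β * auxV β (shiftN k (perSeq s)) =
      (perSeq s k : ℝ) + auxV β (shiftN (k+1) (perSeq s)) := by
    intro k
    have hc1 : ∀ i, shiftN k (perSeq s) i ≤ 1 := fun i => aux_per_le s hs _
    have := auxV_split hβ hc1 1
    rw [aux_shift_shift, add_comm 1 k] at this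
    rw [this]
    have hk : shiftN k (perSeq s) 0 = perSeq s k := by simp [shiftN]
    simp [hk]
    field_simp
  have hV : ∀ k, auxV β (shiftN k (perSeq s)) ∈ Set.Ico (0:ℝ) 1 := fun k =>
    ⟨auxV_nonneg hβ _, aux_lt_one hβ d hd s hne hs hlt k⟩
  have hfl : ∀ k, ⌊β * auxV β (shiftN k (perSeq s))⌋ = (perSeq s k : ℤ) := by
    intro k
    rw [step, Int.floor_eq_iff]
    have := hV (k+1)
    push_cast
    constructor <;> linarith [this.1, this.2]
  have hT : ∀ k, (Tbeta β)^[k] (auxV β (perSeq s)) = auxV β (shiftN k (perSeq s)) := by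
    intro k
    induction k with
    | zero => rfl
    | succ k ih =>
      rw [Function.iterate_succ_apply', ih, Tbeta, Int.fract, hfl, step]
      push_cast; ring
  funext k
  unfold greedy
  rw [hT, hfl]
  simp

/-- the sequence starts strictly below `0 1^m` -/
lemma aux_start {β : ℝ} (hβ : 1 < β) (hβ2 : β < 2) (m : ℕ) (hm : 1 ≤ m)
    (hδ : IsQuasiGreedy β (perSeq (List.replicate m 1 ++ [0])))
    (s : List ℕ) (hne : s ≠ []) (hs : ∀ a ∈ s, a ≤ 1)
    (hsub : Set.Ico (lyndonLeft β s) (lyndonRight β s) ⊆ Set.Ico (0 : ℝ) (1 - 1 / β)) :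
    perSeq s 0 = 0 ∧ ∃ q, 1 ≤ q ∧ q ≤ m ∧ (∀ i, 1 ≤ i → i < q → perSeq s i = 1) ∧
      perSeq s q = 0 := by
  have h0 : 0 < β := by linarith
  have hp : 0 < s.length := List.length_pos_iff.2 hne
  by_cases hz : ∀ i, perSeq s i = 0
  · exact ⟨hz 0, 1, le_rfl, hm, fun i h1 h2 => by omega, hz 1⟩
  push Not at hz
  obtain ⟨k, hk⟩ := hz
  have hc := aux_per_le s hs
  have hbp : 1 < β ^ s.length := one_lt_pow₀ hβ (by omega)
  -- right endpoint bound
  have hVpos : 0 < auxV β (perSeq s) := auxV_pos hβ hc k hk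
  have hR := aux_right hβ s hne hs
  have hLR : lyndonLeft β s < lyndonRight β s := by
    have e : lyndonRight β s * (β ^ s.length - 1) = β ^ s.length * lyndonLeft β s := by
      unfold lyndonRight
      have h5 : β ^ s.length - 1 ≠ 0 := by linarith
      field_simp
    rw [hR] at e ⊢
    nlinarith
  have hle : lyndonRight β s ≤ 1 - 1/β := by
    by_contra hcon
    push Not at hcon
    have := hsub ⟨le_max_left (lyndonLeft β s) (1-1/β), max_lt hLR hcon⟩
    exact absurd this.2 (not_lt.2 (le_max_right _ _))
  rw [hR] at hle
  have hpos : ∀ n, 0 < auxV β (shiftN n (perSeq s)) := by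
    intro n
    refine auxV_pos hβ (fun i => hc _) (k + n * s.length - n) ?_
    have h1 : n ≤ k + n * s.length := by nlinarith
    have h2 : shiftN n (perSeq s) (k + n * s.length - n) = perSeq s k := by
      unfold shiftN perSeq
      rw [Nat.sub_add_cancel h1, Nat.add_mul_mod_self_right]
    rwa [h2]
  have hinv : (1:ℝ)/β > 1 - 1/β := by
    have : 1/2 < 1/β := by apply one_div_lt_one_div_of_lt h0 hβ2
    linarith
  have hfirst : perSeq s 0 = 0 := by
    by_contra h
    have h1 : perSeq s 0 = 1 := by have := hc 0; omega
    have e := auxV_split hβ hc 1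
    have h2 := hpos 1
    have h3 : 0 < auxV β (shiftN 1 (perSeq s)) / β ^ 1 := by positivity
    simp [h1] at e
    simp at h3 hle hinv
    linarith
  refine ⟨hfirst, ?_⟩
  have hexq : ∃ q, 1 ≤ q ∧ q ≤ m ∧ perSeq s q = 0 := by
    by_contra hcon
    push Not at hcon
    have hone : ∀ i, i < m → perSeq s (i+1) = 1 := fun i hi => by
      have := hc (i+1); have := hcon (i+1) (by omega) (by omega); omega
    have e := auxV_split hβ hc (m+1)
    rw [Finset.sum_range_succ', hfirst] at e
    rw [Finset.sum_congr rfl (fun i hi => by rw [hone i (Finset.mem_range.1 hi)])] at e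
    have hd1 := hδ.1
    have hV1 : auxV β (perSeq (List.replicate m 1 ++ [0])) = 1 := hδ.2.2.1
    have e2 := auxV_split hβ hd1 (m+1)
    have hsh : shiftN (m+1) (perSeq (List.replicate m 1 ++ [0])) =
        perSeq (List.replicate m 1 ++ [0]) := by
      rw [aux_per_shift]; simp; rfl
    rw [hsh, hV1, Finset.sum_range_succ] at e2
    rw [Finset.sum_congr rfl (fun i hi => by
      rw [aux_delta, if_neg (by
        have := Finset.mem_range.1 hi
        rw [Nat.mod_eq_of_lt (by omega)]; omega)])] at e2
    rw [aux_delta, Nat.mod_eq_of_lt (Nat.lt_succ_self m), if_pos rfl] at e2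
    have h2 := hpos (m+1)
    have h3 : 0 < auxV β (shiftN (m+1) (perSeq s)) / β ^ (m+1) := by positivity
    have hm1 := Finset.sum_range_succ (fun i : ℕ => ((1:ℕ):ℝ) / β ^ (i+1)) m
    have hm2 := Finset.sum_range_succ' (fun i : ℕ => ((1:ℕ):ℝ) / β ^ (i+1)) m
    rw [hm1] at hm2
    push_cast at *
    simp only [zero_div, zero_add, add_zero, pow_one] at *
    linarith
  classical
  obtain ⟨h1, h2, h3⟩ := Nat.find_spec hexq
  refine ⟨Nat.find hexq, h1, h2, fun i hi hlt => ?_, h3⟩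
  have h4 := Nat.find_min hexq hlt
  have := hc i
  by_contra hne1
  exact h4 ⟨hi, by omega, by omega⟩

lemma aux_bound (d : ℕ → ℕ) (s : List ℕ) (hne : s ≠ [])
    (hlt : ∀ n, seqLt (shiftN n (perSeq s)) d) :
    ∃ N, ∀ k, ∃ n, n < N ∧ (∀ i, i < n → perSeq s (i+k) = d i) ∧ perSeq s (n+k) < d n := by
  have hp : 0 < s.length := List.length_pos_iff.2 hne
  choose f hf1 hf2 using hlt
  refine ⟨(Finset.range s.length).sup f + 1, fun k => ⟨f (k % s.length), ?_, ?_, ?_⟩⟩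
  · exact Nat.lt_succ_of_le (Finset.le_sup (by simpa using Nat.mod_lt _ hp))
  · have := hf1 (k % s.length)
    rw [← aux_per_shift] at this
    exact this
  · have := hf2 (k % s.length)
    rw [← aux_per_shift] at this
    exact this

lemma aux_strip (x : ℕ → ℕ) (hx : ∀ i, x i ≤ 1) (E : ℕ) :
    ∃ e, e ≤ E ∧ (∀ i, e ≤ i → i < E → x i = 1) ∧ (e = 0 ∨ x (e-1) = 0) := by
  induction E with
  | zero => exact ⟨0, le_rfl, fun i _ h => by omega, Or.inl rfl⟩
  | succ E ih =>
    obtain ⟨e, h1, h2, h3⟩ := ih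
    rcases Nat.eq_zero_or_pos (x E) with h | h
    · exact ⟨E+1, le_rfl, fun i _ _ => by omega, Or.inr (by simpa using h)⟩
    · refine ⟨e, by omega, fun i hi hlt => ?_, h3⟩
      rcases Nat.lt_or_ge i E with h4 | h4
      · exact h2 i hi h4
      · have : i = E := by omega
        subst this; have := hx i; omega

lemma aux_cat (ε : List ℕ) (γ z : ℕ → ℕ) (T : ℕ) (hT : ε.length ≤ T)
    (h1 : ∀ i, i < ε.length → z i = ε.getD i 0) (h2 : ∀ i, z (i+T) = γ i) :
    catSeq (ε ++ (List.range (T - ε.length)).map (fun i => z (i+ε.length))) γ = z := by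
  funext i
  unfold catSeq
  have hl : (ε ++ (List.range (T - ε.length)).map (fun i => z (i+ε.length))).length = T := by
    simp; omega
  rw [hl]
  split_ifs with h
  · rcases Nat.lt_or_ge i ε.length with h3 | h3
    · rw [h1 i h3, List.getD_eq_getElem?_getD, List.getElem?_append_left h3,
        List.getD_eq_getElem?_getD]
    · have : i - ε.length < T - ε.length := by omega
      simp [List.getD_eq_getElem?_getD, List.getElem?_append_right h3, this,
        Nat.sub_add_cancel h3]
  · rw [← h2, Nat.sub_add_cancel (by omega)]

/-- combinatorial core -/
lemma aux_core (m : ℕ) (c : ℕ → ℕ)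
    (N : ℕ) (hN : ∀ k, ∃ n, n < N ∧
      (∀ i, i < n → c (i+k) = perSeq (List.replicate m 1 ++ [0]) i) ∧
      c (n+k) < perSeq (List.replicate m 1 ++ [0]) n)
    (hc0 : c 0 = 0) (q : ℕ) (hq1 : 1 ≤ q) (hqm : q ≤ m)
    (hq2 : ∀ i, 1 ≤ i → i < q → c i = 1) (hq3 : c q = 0)
    (x γ : ℕ → ℕ) (E : ℕ)
    (hx1 : ∀ i, x i ≤ 1) (hx2 : ∀ n, seqLe c (shiftN n x))
    (hx3 : ∀ n, ∃ i, i ≤ m ∧ x (n+i) = 0)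
    (hg1 : ∀ i, γ i ≤ 1) (hg2 : ∀ n, seqLe c (shiftN n γ))
    (hg3 : ∀ n, ∃ i, i ≤ m ∧ γ (n+i) = 0) :
    ∃ (z : ℕ → ℕ) (T : ℕ), E ≤ T ∧ (∀ i, i < E → z i = x i) ∧ (∀ i, z (i+T) = γ i) ∧
      (∀ i, z i ≤ 1) ∧ (∀ n, seqLe c (shiftN n z)) ∧ (∀ n, ∃ i, i ≤ m ∧ z (n+i) = 0) := by
  obtain ⟨e, he1, he2, he3⟩ := aux_strip x hx1 E
  have hEe : E ≤ e + m := by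
    obtain ⟨i, hi, hz⟩ := hx3 e
    by_contra hcon
    have := he2 (e+i) (by omega) (by omega)
    omega
  have hNpos : 1 ≤ N := by obtain ⟨n, hn, -⟩ := hN 0; omega
  -- leading ones of γ
  obtain ⟨j, hjm, hj0, hj1⟩ : ∃ j, j ≤ m ∧ γ j = 0 ∧ ∀ i, i < j → γ i = 1 := by
    classical
    have hex : ∃ j, γ j = 0 := by
      obtain ⟨i, _, h⟩ := hg3 0
      exact ⟨_, h⟩
    refine ⟨Nat.find hex, ?_, Nat.find_spec hex, fun i hi => ?_⟩
    · obtain ⟨i, hi, h⟩ := hg3 0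
      rw [zero_add] at h
      exact (Nat.find_min' hex h).trans hi
    · have := Nat.find_min hex hi
      have := hg1 i
      omega
  obtain ⟨A, hA⟩ : ∃ A, A = N * (m+1) := ⟨_, rfl⟩
  have hAN : N ≤ A := by nlinarith
  have hAm : m + 1 ≤ A := by nlinarith
  have hAmod : A % (m+1) = 0 := by rw [hA]; simp
  let z : ℕ → ℕ := fun i => if i < e then x i else if i < e + A then
    (if (i - e) % (m+1) = m then 0 else 1) else if i < e + A + (m-j) then 1
    else γ (i - (e + A + (m-j)))
  have z1 : ∀ i, i < e → z i = x i := fun i hi => by simp [z, hi]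
  have z2 : ∀ i, i < A → z (e+i) = if i % (m+1) = m then 0 else 1 := fun i hi => by
    simp [z, hi]
  have z3 : ∀ i, i < m-j → z (e+A+i) = 1 := fun i hi => by
    have h1 : ¬ (e+A+i < e) := by omega
    have h2 : ¬ (e+A+i < e+A) := by omega
    have h3 : (e+A+i < e+A+(m-j)) := by omega
    simp only [z, if_neg h1, if_neg h2, if_pos h3]
  have z4 : ∀ i, z (e+A+(m-j)+i) = γ i := fun i => by
    have h1 : ¬ (e+A+(m-j)+i < e) := by omega
    have h2 : ¬ (e+A+(m-j)+i < e+A) := by omega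
    have h3 : ¬ (e+A+(m-j)+i < e+A+(m-j)) := by omega
    simp only [z, if_neg h1, if_neg h2, if_neg h3]
    congr 1; omega
  clear_value z
  -- ones after the middle block
  have z5 : ∀ i, i < m → z (e+A+i) = 1 := fun i hi => by
    rcases Nat.lt_or_ge i (m-j) with h | h
    · exact z3 i h
    · have h1 : e+A+i = e+A+(m-j)+(i-(m-j)) := by omega
      rw [h1, z4]; exact hj1 _ (by omega)
  have loc : ∀ n, n < e ∨ (∃ i, i < A ∧ n = e+i) ∨ (∃ i, i < m-j ∧ n = e+A+i) ∨
      ∃ i, n = e+A+(m-j)+i := by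
    intro n
    rcases Nat.lt_or_ge n e with h | h
    · exact Or.inl h
    rcases Nat.lt_or_ge n (e+A) with h2 | h2
    · exact Or.inr (Or.inl ⟨n-e, by omega, by omega⟩)
    rcases Nat.lt_or_ge n (e+A+(m-j)) with h3 | h3
    · exact Or.inr (Or.inr (Or.inl ⟨n-(e+A), by omega, by omega⟩))
    · exact Or.inr (Or.inr (Or.inr ⟨n-(e+A+(m-j)), by omega⟩))
  have cone : ∀ n, z n = 1 → seqLe c (shiftN n z) := fun n hn => by
    refine Or.inr ⟨0, fun i hi => by omega, ?_⟩
    simp [shiftN, hc0, hn]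
  refine ⟨z, e+A+(m-j), by omega, ?_, ?_, ?_, ?_, ?_⟩
  · intro i hi
    rcases Nat.lt_or_ge i e with h | h
    · exact z1 i h
    · rw [he2 i h hi]
      have h1 : i = e + (i-e) := by omega
      rw [h1, z2 _ (by omega), if_neg]
      rw [Nat.mod_eq_of_lt (by omega)]; omega
  · intro i; rw [add_comm]; exact z4 i
  · intro n
    rcases loc n with h | ⟨i, h, rfl⟩ | ⟨i, h, rfl⟩ | ⟨i, rfl⟩
    · rw [z1 n h]; exact hx1 n
    · rw [z2 i h]; split_ifs <;> omega
    · rw [z3 i h]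
    · rw [z4]; exact hg1 i
  · intro n
    rcases loc n with h | ⟨i, h, rfl⟩ | ⟨i, h, rfl⟩ | ⟨i, rfl⟩
    · right
      have key : (∃ k, n + k < e ∧ (∀ i, i < k → c i = x (i+n)) ∧ c k < x (k+n)) ∨
          (∀ i, i < e - n → c i = x (i+n)) := by
        rcases hx2 n with h1 | ⟨k, h1, h2⟩
        · exact Or.inr (fun i _ => congrFun h1 i)
        · by_cases hk : n + k < e
          · exact Or.inl ⟨k, hk, h1, h2⟩
          · exact Or.inr (fun i hi => h1 i (by omega))
      rcases key with ⟨k, hk, h1, h2⟩ | h1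
      · refine ⟨k, fun i hi => ?_, ?_⟩
        · rw [h1 i hi, shiftN, z1 _ (by omega)]
        · rw [shiftN, z1 _ (by omega)]; exact h2
      · obtain ⟨r, hr, hr1, hr2⟩ := hN (e-n)
        refine ⟨r + (e-n), fun i hi => ?_, ?_⟩
        · rcases Nat.lt_or_ge i (e-n) with h3 | h3
          · rw [h1 i h3, shiftN, z1 _ (by omega)]
          · have h4 := hr1 (i-(e-n)) (by omega)
            rw [Nat.sub_add_cancel h3, aux_delta] at h4
            have h5 : i + n = e + (i-(e-n)) := by omega
            rw [h4, shiftN, h5, z2 _ (by omega)]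
        · rw [aux_delta] at hr2
          have h5 : r + (e-n) + n = e + r := by omega
          rw [shiftN, h5, z2 _ (by omega)]
          exact hr2
    · by_cases him : i % (m+1) = m
      · -- a zero, followed by m ones
        have hones : ∀ l, 1 ≤ l → l ≤ m → z (e+i+l) = 1 := by
          intro l hl1 hl2
          rcases Nat.lt_or_ge (i+l) A with h3 | h3
          · rw [add_assoc, z2 _ h3, if_neg]
            have h4 := Nat.div_add_mod i (m+1)
            have h5 : i + l = (l-1) + (m+1) * (i/(m+1) + 1) := by
              rw [mul_add]; omega
            rw [h5, Nat.add_mul_mod_self_left, Nat.mod_eq_of_lt (by omega)]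
            omega
          · have h4 : i + 1 = A := by
              have h6 := Nat.div_add_mod i (m+1)
              have h7 : i + 1 = (m+1) * (i/(m+1) + 1) := by rw [mul_add]; omega
              have h8 : i/(m+1) < N := by
                rw [Nat.div_lt_iff_lt_mul (by omega)]; omega
              have h9 : N ≤ i/(m+1) + 1 := by
                by_contra hcon
                have h10 : i/(m+1) + 2 ≤ N := by omega
                have : (i/(m+1) + 2) * (m+1) ≤ A := by rw [hA]; gcongr
                have : (i/(m+1) + 2) * (m+1) = (m+1) * (i/(m+1) + 1) + (m+1) := by ring
                omega
              have h11 : i/(m+1)+1 = N := by omega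
              rw [h7, h11, hA, mul_comm]
            have h12 : e + i + l = e + A + (l-1) := by omega
            rw [h12]; exact z5 _ (by omega)
        right
        refine ⟨q, fun l hl => ?_, ?_⟩
        · rcases Nat.eq_zero_or_pos l with h3 | h3
          · subst h3; simp [shiftN, hc0, z2 i h, him]
          · rw [hq2 l h3 hl, shiftN, add_comm, hones l h3 (by omega)]
        · rw [hq3, shiftN, add_comm, hones q hq1 hqm]; omega
      · exact cone _ (by rw [z2 i h, if_neg him])
    · exact cone _ (z3 i h)
    · have : shiftN (e+A+(m-j)+i) z = shiftN i γ := by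
        funext l
        rw [shiftN, shiftN, ← z4]; congr 1; omega
      rw [this]; exact hg2 i
  · intro n
    rcases loc n with h | ⟨i, h, rfl⟩ | ⟨i, h, rfl⟩ | ⟨i, rfl⟩
    · obtain ⟨i, hi, hz⟩ := hx3 n
      by_cases h2 : n + i < e
      · exact ⟨i, hi, by rw [z1 _ h2, hz]⟩
      · refine ⟨e-1-n, by omega, ?_⟩
        have h3 : n + (e-1-n) = e-1 := by omega
        rw [h3, z1 _ (by omega)]
        rcases he3 with h4 | h4
        · omega
        · exact h4
    · have hlt := Nat.mod_lt i (show 0 < m+1 by omega)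
      have h4 := Nat.div_add_mod i (m+1)
      have h8 : i/(m+1) < N := by
        rw [Nat.div_lt_iff_lt_mul (by omega)]; omega
      have h9 : (i/(m+1)+1) * (m+1) ≤ A := by rw [hA]; gcongr; omega
      have h10 : (i/(m+1)+1) * (m+1) = (m+1) * (i/(m+1)) + (m+1) := by ring
      refine ⟨m - i % (m+1), by omega, ?_⟩
      have h5 : i + (m - i % (m+1)) = m + (m+1) * (i/(m+1)) := by omega
      rw [add_assoc, z2 _ (by omega), h5, Nat.add_mul_mod_self_left,
        Nat.mod_eq_of_lt (by omega), if_pos rfl]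
    · refine ⟨m-j-i+j, by omega, ?_⟩
      have h5 : e+A+i+(m-j-i+j) = e+A+(m-j)+j := by omega
      rw [h5, z4, hj0]
    · obtain ⟨l, hl, hz⟩ := hg3 i
      exact ⟨l, hl, by rw [add_assoc, z4, hz]⟩

/-- Let `β ∈ (1,2)` with `δ(β) = (1^m 0)^∞` for some `m ≥ 1` and let
`[t_L, t_R) ⊆ [0, 1 - 1/β)` be a β-Lyndon interval. Then `K̃_β(t_R)` is transitive:
for any word `ε` occurring as a prefix of an element of `K̃_β(t_R)` and any
`γ ∈ K̃_β(t_R)` there is a word `ν` with `ε ν γ ∈ K̃_β(t_R)`. -/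
theorem stmt_6 (β : ℝ) (hβ : β ∈ Set.Ioo (1 : ℝ) 2) (m : ℕ) (hm : 1 ≤ m)
    (hδ : IsQuasiGreedy β (perSeq (List.replicate m 1 ++ [0])))
    (s : List ℕ) (hs : IsBetaLyndon β s)
    (hsub : Set.Ico (lyndonLeft β s) (lyndonRight β s) ⊆ Set.Ico (0 : ℝ) (1 - 1 / β)) :
    ∀ ε : List ℕ,
      (∃ x ∈ Ktilde β (lyndonRight β s) (perSeq (List.replicate m 1 ++ [0])),
        ∀ i, i < ε.length → x i = ε.getD i 0) →
      ∀ γ ∈ Ktilde β (lyndonRight β s) (perSeq (List.replicate m 1 ++ [0])),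
        ∃ ν : List ℕ,
          catSeq (ε ++ ν) γ ∈
            Ktilde β (lyndonRight β s) (perSeq (List.replicate m 1 ++ [0])) := by
  obtain ⟨hne, hs1, -, hs3⟩ := hs
  have hlt := hs3 _ hδ
  have hgr := aux_greedy hβ.1 _ hδ s hne hs1 hlt
  obtain ⟨hc0, q, hq1, hqm, hq2, hq3⟩ := aux_start hβ.1 hβ.2 m hm hδ s hne hs1 hsub
  obtain ⟨N, hN⟩ := aux_bound _ s hne hlt
  rintro ε ⟨x, ⟨hx1, hx2⟩, hxε⟩ γ ⟨hg1, hg2⟩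
  rw [hgr] at hx2 hg2
  obtain ⟨z, T, hT, hz1, hz2, hz3, hz4, hz5⟩ := aux_core m (perSeq s) N hN hc0 q hq1 hqm hq2 hq3
    x γ ε.length hx1 (fun n => (hx2 n).1) (fun n => aux_window m x n (hx2 n).2)
    hg1 (fun n => (hg2 n).1) (fun n => aux_window m γ n (hg2 n).2)
  refine ⟨(List.range (T - ε.length)).map (fun i => z (i+ε.length)), ?_⟩
  rw [aux_cat ε γ z T hT (fun i hi => by rw [hz1 i hi, hxε i hi]) hz2]
  refine ⟨hz3, fun n => ⟨?_, aux_window_conv m z n hz3 hz5⟩⟩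
  rw [hgr]
  exact hz4 n
end

section
/- Let β ∈ (1,2) be a multinacci number. Then the union of all β-Lyndon intervals has full Lebesgue measure in [0, 1 − 1/β); that is, the Lebesgue measure of [0, 1 − 1/β) \ ⋃ [t_L, t_R) is zero. -/
open Set Filter MeasureTheory

section aux

lemma aux_seqLt_trans {x y z : ℕ → ℕ} (h : seqLt x y) (h' : seqLe y z) : seqLt x z := by
  rcases h' with rfl | ⟨n, hn, hn'⟩
  · exact h
  obtain ⟨k, hk, hk'⟩ := h
  rcases lt_trichotomy k n with hkn | rfl | hkn
  · exact ⟨k, fun i hi => (hk i hi).trans (hn i (hi.trans hkn)), (hn k hkn) ▸ hk'⟩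
  · exact ⟨k, fun i hi => (hk i hi).trans (hn i hi), hk'.trans hn'⟩
  · exact ⟨n, fun i hi => (hk i (hi.trans hkn)).trans (hn i hi), (hk n hkn) ▸ hn'⟩

def auxE (m : ℕ) : ℕ → ℕ := fun i => if i % (m + 1) = m then 0 else 1

lemma auxE_tsum (β : ℝ) (hβ : 1 < β) (m : ℕ)
    (h : β ^ (m + 1) = ∑ i ∈ Finset.range (m + 1), β ^ i) :
    ∑' i : ℕ, (auxE m i : ℝ) / β ^ (i + 1) = 1 := by
  have h0 : 0 < β := by linarith
  have hs : Summable (fun i : ℕ => (auxE m i : ℝ) / β ^ (i + 1)) := by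
    have : Summable (fun i : ℕ => (1 / β) ^ i) :=
      summable_geometric_of_lt_one (by positivity) (by rw [div_lt_one h0]; exact hβ)
    refine Summable.of_nonneg_of_le (fun i => by positivity) (fun i => ?_) this
    rw [div_pow, one_pow]
    have h1 : (auxE m i : ℝ) ≤ 1 := by
      unfold auxE; split_ifs <;> simp
    apply div_le_div₀ zero_le_one h1 (by positivity)
    exact pow_le_pow_right₀ hβ.le (by omega)
  have h1 := hs.sum_add_tsum_nat_add (m + 1)
  have h2 : ∑' i : ℕ, (auxE m (i + (m + 1)) : ℝ) / β ^ (i + (m + 1) + 1)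
      = (∑' i : ℕ, (auxE m i : ℝ) / β ^ (i + 1)) / β ^ (m + 1) := by
    rw [← tsum_div_const]
    congr 1; ext i
    have : auxE m (i + (m + 1)) = auxE m i := by simp [auxE]
    rw [this, div_div, ← pow_add]
    congr 2; ring
  have h3 : ∑ i ∈ Finset.range (m + 1), (auxE m i : ℝ) / β ^ (i + 1) = 1 - 1 / β ^ (m + 1) := by
    have : ∑ i ∈ Finset.range (m + 1), (1 : ℝ) / β ^ (i + 1) = 1 := by
      rw [← Finset.sum_range_reflect]
      have : ∀ j ∈ Finset.range (m + 1), (1 : ℝ) / β ^ (m + 1 - 1 - j + 1)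
          = β ^ j / β ^ (m + 1) := by
        intro j hj
        rw [Finset.mem_range] at hj
        rw [div_eq_div_iff (by positivity) (by positivity), one_mul, ← pow_add]
        congr 1; omega
      rw [Finset.sum_congr rfl this, ← Finset.sum_div, ← h]
      exact div_self (by positivity)
    rw [Finset.sum_range_succ] at this ⊢
    have h4 : ∑ i ∈ Finset.range m, (auxE m i : ℝ) / β ^ (i + 1)
        = ∑ i ∈ Finset.range m, (1 : ℝ) / β ^ (i + 1) := by
      apply Finset.sum_congr rfl
      intro i hi
      rw [Finset.mem_range] at hi
      have : auxE m i = 1 := by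
        unfold auxE
        rw [Nat.mod_eq_of_lt (by omega), if_neg (by omega)]
      rw [this]; simp
    have h5 : auxE m m = 0 := by
      unfold auxE
      rw [Nat.mod_eq_of_lt (by omega), if_pos rfl]
    rw [h4, h5]
    simp only [Nat.cast_zero, zero_div, add_zero]
    linarith
  rw [h2, h3] at h1
  set S := ∑' i : ℕ, (auxE m i : ℝ) / β ^ (i + 1)
  have hp : 1 < β ^ (m + 1) := one_lt_pow₀ hβ (by omega)
  have hp0 : β ^ (m + 1) ≠ 0 := by positivity
  field_simp at h1
  have : (S - 1) * (β ^ (m + 1) - 1) = 0 := by linarith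
  rcases mul_eq_zero.1 this with h | h <;> linarith

lemma aux_iter_mem {β t : ℝ} (ht : t ∈ Set.Ico (0:ℝ) 1) (i : ℕ) :
    (Tbeta β)^[i] t ∈ Set.Ico (0:ℝ) 1 := by
  cases i with
  | zero => exact ht
  | succ k =>
    rw [Function.iterate_succ_apply']
    exact ⟨Int.fract_nonneg _, Int.fract_lt_one _⟩

lemma aux_rec {β t : ℝ} (hβ : 0 < β) (ht : t ∈ Set.Ico (0:ℝ) 1) (i : ℕ) :
    β * (Tbeta β)^[i] t = greedy β t i + (Tbeta β)^[i + 1] t := by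
  have h := aux_iter_mem (β := β) ht i
  rw [Function.iterate_succ_apply']
  have h1 : (0:ℤ) ≤ ⌊β * (Tbeta β)^[i] t⌋ := Int.floor_nonneg.2 (mul_nonneg hβ.le h.1)
  have h2 : ((greedy β t i : ℕ) : ℝ) = ((⌊β * (Tbeta β)^[i] t⌋ : ℤ) : ℝ) := by
    unfold greedy
    have := Int.toNat_of_nonneg h1
    exact_mod_cast this
  rw [h2]
  exact (Int.floor_add_fract _).symm

lemma aux_greedy_le {β t : ℝ} (hβ : β ∈ Set.Ioo (1:ℝ) 2) (ht : t ∈ Set.Ico (0:ℝ) 1) (i : ℕ) :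
    greedy β t i ≤ 1 := by
  have h := aux_iter_mem (β := β) ht i
  have h' := aux_iter_mem (β := β) ht (i+1)
  have hr := aux_rec (by linarith [hβ.1] : 0 < β) ht i
  have : (greedy β t i : ℝ) < 2 := by nlinarith [h.1, h.2, h'.1, hβ.1, hβ.2]
  have : greedy β t i < 2 := by exact_mod_cast this
  omega

lemma aux_sum {β t : ℝ} (hβ : 0 < β) (ht : t ∈ Set.Ico (0:ℝ) 1) (i k : ℕ) :
    (Tbeta β)^[i] t = ∑ j ∈ Finset.range k, (greedy β t (i + j) : ℝ) / β ^ (j + 1)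
      + (Tbeta β)^[i + k] t / β ^ k := by
  induction k with
  | zero => simp
  | succ k ih =>
    rw [ih, Finset.sum_range_succ, add_assoc]
    congr 1
    have := aux_rec hβ ht (i + k)
    rw [← add_assoc, ← add_div, ← this, pow_succ]
    field_simp

lemma aux_agree {β t : ℝ} (hβ : 0 < β) (ht : t ∈ Set.Ico (0:ℝ) 1) (i j : ℕ)
    (h : ∀ l < j, greedy β t (i + l) = greedy β t l) :
    (Tbeta β)^[i + j] t - (Tbeta β)^[j] t = β ^ j * ((Tbeta β)^[i] t - t) := by
  induction j with
  | zero => simp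
  | succ j ih =>
    have h1 := ih (fun l hl => h l (by omega))
    have h2 := aux_rec hβ ht (i + j)
    have h3 := aux_rec hβ ht j
    rw [h j (by omega)] at h2
    rw [← add_assoc, pow_succ, mul_right_comm, ← h1]
    linarith

lemma aux_greedy_mono {β t : ℝ} (hβ : 0 < β) (i j : ℕ)
    (h : (Tbeta β)^[i] t ≤ (Tbeta β)^[j] t) : greedy β t i ≤ greedy β t j := by
  unfold greedy
  exact Int.toNat_le_toNat (Int.floor_le_floor (mul_le_mul_of_nonneg_left h hβ.le))

lemma aux_lyndon {β : ℝ} (hβ : β ∈ Set.Ioo (1:ℝ) 2) {m : ℕ} (hm : 1 ≤ m)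
    (hmul : β ^ (m + 1) = ∑ i ∈ Finset.range (m + 1), β ^ i)
    {t : ℝ} (ht : t ∈ Set.Ico (0:ℝ) (1 - 1 / β)) {n : ℕ}
    (hn : (Tbeta β)^[n] t < t) (hmin : ∀ k < n, t ≤ (Tbeta β)^[k] t) :
    IsBetaLyndon β ((List.range n).map (greedy β t)) := by
  have hb0 : 0 < β := by linarith [hβ.1]
  have hb1 := hβ.1
  have hbinv : 0 < 1 / β := by positivity
  have ht1 : t ∈ Set.Ico (0:ℝ) 1 := ⟨ht.1, by linarith [ht.2]⟩
  set g := greedy β t with hg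
  set s := (List.range n).map g with hs
  have hlen : s.length = n := by simp [hs]
  have hget : ∀ i, s.getD i 0 = if i < n then g i else 0 := by
    intro i
    split_ifs with h
    · simp [hs, h]
    · simp [hs, List.getD, h]
  have hbt : β * t < 1 := by
    have : β * t < β * (1 - 1 / β) := mul_lt_mul_of_pos_left ht.2 hb0
    have h2 : β * (1 - 1 / β) = β - 1 := by field_simp
    linarith [hβ.2]
  have hx1 := aux_iter_mem (β := β) ht1
  have hr := aux_rec hb0 ht1
  have hg0 : g 0 = 0 := by
    have := hr 0
    have h1 := (hx1 1).1
    simp only [Function.iterate_zero, id, zero_add] at this h1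
    have h2 : (g 0 : ℝ) < 1 := by linarith
    have : g 0 < 1 := by exact_mod_cast h2
    omega
  have hn2 : 2 ≤ n := by
    by_contra hcon
    have : n = 0 ∨ n = 1 := by omega
    rcases this with rfl | rfl
    · simp at hn
    · have := hr 0
      rw [← hg, hg0] at this
      simp only [zero_add, Function.iterate_zero, id, Nat.cast_zero] at this
      rw [← this] at hn
      nlinarith [ht.1]
  have hone : ∑ i ∈ Finset.range (m + 1), (1 : ℝ) / β ^ (i + 1) = 1 := by
    rw [← Finset.sum_range_reflect]
    have : ∀ j ∈ Finset.range (m + 1), (1 : ℝ) / β ^ (m + 1 - 1 - j + 1)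
        = β ^ j / β ^ (m + 1) := by
      intro j hj
      rw [Finset.mem_range] at hj
      rw [div_eq_div_iff (by positivity) (by positivity), one_mul, ← pow_add]
      congr 1; omega
    rw [Finset.sum_congr rfl this, ← Finset.sum_div, ← hmul]
    exact div_self (by positivity)
  have hno : ∀ i, ¬ (∀ j < m + 1, g (i + j) = 1) := by
    intro i hi
    have h1 := aux_sum hb0 ht1 i (m + 1)
    have h2 : ∑ j ∈ Finset.range (m + 1), (greedy β t (i + j) : ℝ) / β ^ (j + 1) = 1 := by
      rw [← hone]
      apply Finset.sum_congr rfl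
      intro j hj
      rw [← hg, hi j (Finset.mem_range.1 hj)]; simp
    have h3 := (hx1 i).2
    have h4 : 0 ≤ (Tbeta β)^[i + (m + 1)] t / β ^ (m + 1) :=
      div_nonneg (hx1 _).1 (by positivity)
    linarith
  have hno0 : ¬ (∀ j < m, g (1 + j) = 1) := by
    intro hi
    have h1 := aux_sum hb0 ht1 0 (m + 1)
    rw [Finset.sum_range_succ'] at h1 hone
    have h2 : ∑ j ∈ Finset.range m, (greedy β t (0 + (j + 1)) : ℝ) / β ^ (j + 1 + 1)
        = ∑ j ∈ Finset.range m, (1 : ℝ) / β ^ (j + 1 + 1) := by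
      apply Finset.sum_congr rfl
      intro j hj
      rw [← hg, show 0 + (j + 1) = 1 + j by ring, hi j (Finset.mem_range.1 hj)]; simp
    have h4 : 0 ≤ (Tbeta β)^[0 + (m + 1)] t / β ^ (m + 1) :=
      div_nonneg (hx1 _).1 (by positivity)
    rw [h2, ← hg, hg0] at h1
    simp only [zero_add, pow_one, Function.iterate_zero, id, Nat.cast_zero, zero_div,
      add_zero] at h1 hone h4
    linarith [ht.2]
  have hper : ∀ i, perSeq s i = g (i % n) := by
    intro i
    unfold perSeq
    rw [hlen, hget, if_pos (Nat.mod_lt _ (by omega))]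
  have hg1 : ∀ i, g i ≤ 1 := aux_greedy_le hβ ht1
  refine ⟨?_, ?_, ?_, ?_⟩
  · intro h
    rw [h] at hlen
    simp at hlen; omega
  · intro a ha
    rw [hs, List.mem_map] at ha
    obtain ⟨i, -, rfl⟩ := ha
    exact hg1 i
  · intro i hi1 hin
    rw [hlen] at hin ⊢
    have hw1 : ∀ j, j < n - i → wordSeq (s.take (n - i)) j = g j := by
      intro j hj
      unfold wordSeq
      rw [List.getD_eq_getElem?_getD, List.getElem?_take_of_lt hj, ← List.getD_eq_getElem?_getD,
        hget, if_pos (by omega)]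
    have hw2 : ∀ j, j < n - i → wordSeq (s.drop i) j = g (i + j) := by
      intro j hj
      unfold wordSeq
      rw [List.getD_eq_getElem?_getD, List.getElem?_drop, ← List.getD_eq_getElem?_getD,
        hget, if_pos (by omega)]
    by_cases hall : ∀ l < n - i, g (i + l) = g l
    · exfalso
      have h1 := aux_agree hb0 ht1 i (n - i) hall
      rw [show i + (n - i) = n by omega] at h1
      have h2 := hmin i hin
      have h3 := hmin (n - i) (by omega)
      have h4 : 0 ≤ β ^ (n - i) * ((Tbeta β)^[i] t - t) :=
        mul_nonneg (by positivity) (by linarith)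
      linarith
    · have hex : ∃ l, l < n - i ∧ g (i + l) ≠ g l := by
        push Not at hall; exact hall
      classical
      obtain ⟨hj, hjne⟩ := Nat.find_spec hex
      have hjm : ∀ l < Nat.find hex, g (i + l) = g l := by
        intro l hl
        by_contra hc
        exact Nat.find_min hex hl ⟨by omega, hc⟩
      set j := Nat.find hex
      refine ⟨j, fun l hl => ?_, ?_⟩
      · rw [hw1 l (by omega), hw2 l (by omega), hjm l hl]
      · rw [hw1 j hj, hw2 j hj]
        have h1 := aux_agree hb0 ht1 i j hjm
        have h4 : 0 ≤ β ^ j * ((Tbeta β)^[i] t - t) :=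
          mul_nonneg (by positivity) (by linarith [hmin i hin])
        exact lt_of_le_of_ne (aux_greedy_mono hb0 _ _ (by linarith)) (Ne.symm hjne)
  · intro d hd k
    have hed : seqLe (auxE m) d := by
      refine hd.2.2.2 _ ?_ ?_ (auxE_tsum β hβ.1 m hmul)
      · intro i; unfold auxE; split_ifs <;> simp
      · rintro ⟨N, hN⟩
        have := hN (N * (m + 1)) (by nlinarith)
        unfold auxE at this
        rw [Nat.mul_mod_left, if_neg (by omega)] at this
        omega
    refine aux_seqLt_trans ?_ hed
    -- no m+1 consecutive ones in the periodic sequence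
    have hnoP : ∀ i, ¬ (∀ j < m + 1, perSeq s (i + j) = 1) := by
      intro i hi
      have hmod : ∀ j < m + 1, (i + j) % n = i % n + j := by
        intro j
        induction j with
        | zero => intro _; simp
        | succ j ih =>
          intro hj
          have h1 := ih (by omega)
          have h2 := hi (j + 1) hj
          rw [hper] at h2
          have h3 : (i + j) % n < n := Nat.mod_lt _ (by omega)
          by_cases h4 : (i + j) % n + 1 < n
          · rw [← add_assoc, Nat.add_mod, Nat.mod_eq_of_lt (show 1 < n by omega),
              Nat.mod_eq_of_lt h4]
            omega
          · exfalso
            have h5 : (i + j) % n + 1 = n := by omega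
            rw [← add_assoc, Nat.add_mod, Nat.mod_eq_of_lt (show 1 < n by omega), h5,
              Nat.mod_self, hg0] at h2
            omega
      apply hno (i % n)
      intro j hj
      rw [← hmod j hj, ← hper]
      exact hi j hj
    by_cases heq : shiftN k (perSeq s) = auxE m
    · exfalso
      have hp : ∀ i, perSeq s i = auxE m (i + (k * n - k)) := by
        intro i
        rw [← heq]
        unfold shiftN
        have : k ≤ k * n := by nlinarith
        rw [show i + (k * n - k) + k = i + k * n by omega, hper, hper, Nat.add_mul_mod_self_right]
      set r := k * n - k
      have hr0 : r % (m + 1) = m := by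
        have := hp 0
        rw [hper, Nat.zero_mod, hg0, zero_add] at this
        unfold auxE at this
        by_contra hc
        rw [if_neg hc] at this; omega
      have hpos : ∀ i, 1 ≤ i → i ≤ m → perSeq s i = 1 := by
        intro i h1 h2
        rw [hp]
        unfold auxE
        rw [if_neg]
        rw [Nat.add_mod, hr0, Nat.mod_eq_of_lt (show i < m + 1 by omega),
          show i + m = (i - 1) + (m + 1) by omega, Nat.add_mod_right,
          Nat.mod_eq_of_lt (by omega)]
        omega
      by_cases hnm : n ≤ m
      · have := hpos n (by omega) hnm
        rw [hper, Nat.mod_self, hg0] at this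
        omega
      · apply hno0
        intro j hj
        have := hpos (1 + j) (by omega) (by omega)
        rwa [hper, Nat.mod_eq_of_lt (by omega)] at this
    · have hex : ∃ N, shiftN k (perSeq s) N ≠ auxE m N := by
        by_contra hc
        push Not at hc
        exact heq (funext hc)
      classical
      have hN := Nat.find_spec hex
      have hNm : ∀ l < Nat.find hex, shiftN k (perSeq s) l = auxE m l := by
        intro l hl
        by_contra hc
        exact Nat.find_min hex hl hc
      set N := Nat.find hex
      refine ⟨N, hNm, ?_⟩
      by_contra hlt
      have hP1 : shiftN k (perSeq s) N ≤ 1 := by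
        unfold shiftN; rw [hper]; exact hg1 _
      have hE0 : N % (m + 1) = m := by
        by_contra hc
        have : auxE m N = 1 := by unfold auxE; rw [if_neg hc]
        omega
      have hE : auxE m N = 0 := by unfold auxE; rw [if_pos hE0]
      have hmN : m ≤ N := by
        have := Nat.mod_le N (m + 1); omega
      apply hnoP (N - m + k)
      intro j hj
      by_cases hjm : j = m
      · subst hjm
        have h1 : shiftN k (perSeq s) N = 1 := by omega
        unfold shiftN at h1
        rwa [show N - j + k + j = N + k by omega]
      · have h1 := hNm (N - m + j) (by omega)
        unfold shiftN at h1
        rw [show N - m + k + j = N - m + j + k by omega, h1]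
        unfold auxE
        rw [if_neg]
        have h2 : N - m = (m + 1) * (N / (m + 1)) := by
          have := Nat.div_add_mod N (m + 1); omega
        rw [h2, Nat.mul_add_mod, Nat.mod_eq_of_lt (by omega)]
        exact hjm

lemma aux_mem {β : ℝ} (hβ : β ∈ Set.Ioo (1:ℝ) 2) {t : ℝ} (ht : t ∈ Set.Ico (0:ℝ) 1) {n : ℕ}
    (hn0 : n ≠ 0) (hn : (Tbeta β)^[n] t < t) :
    t ∈ Set.Ico (lyndonLeft β ((List.range n).map (greedy β t)))
      (lyndonRight β ((List.range n).map (greedy β t))) := by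
  have hb0 : 0 < β := by linarith [hβ.1]
  have h1 := aux_sum hb0 ht 0 n
  have hL : lyndonLeft β ((List.range n).map (greedy β t))
      = ∑ j ∈ Finset.range n, (greedy β t (0 + j) : ℝ) / β ^ (j + 1) := by
    unfold lyndonLeft
    rw [List.length_map, List.length_range]
    apply Finset.sum_congr rfl
    intro j hj
    rw [Finset.mem_range] at hj
    simp [hj]
  rw [← hL] at h1
  simp only [Function.iterate_zero, id, zero_add] at h1
  have hp : 1 < β ^ n := one_lt_pow₀ hβ.1 hn0
  have hp0 : 0 < β ^ n := by linarith
  have h0 := (aux_iter_mem (β := β) ht n).1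
  constructor
  · have : 0 ≤ (Tbeta β)^[n] t / β ^ n := div_nonneg h0 hp0.le
    linarith
  · unfold lyndonRight
    rw [List.length_map, List.length_range, div_mul_eq_mul_div, lt_div_iff₀ (by linarith)]
    have h2 : lyndonLeft β ((List.range n).map (greedy β t)) = t - (Tbeta β)^[n] t / β ^ n := by
      linarith
    rw [h2]
    have : β ^ n * (t - (Tbeta β)^[n] t / β ^ n) = β ^ n * t - (Tbeta β)^[n] t := by
      field_simp
    rw [this]; nlinarith

lemma aux_T_le {β : ℝ} (hβ : 1 < β) (n : ℕ) : ∀ {x : ℝ}, 0 ≤ x →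
    (Tbeta β)^[n] x ≤ β ^ n * x := by
  induction n with
  | zero => intro x _; simp
  | succ n ih =>
    intro x hx
    rw [Function.iterate_succ_apply]
    have h0 : 0 ≤ β * x := by positivity
    have h1 : Tbeta β x ≤ β * x := by
      unfold Tbeta
      have : (0:ℝ) ≤ (⌊β * x⌋ : ℤ) := by exact_mod_cast Int.floor_nonneg.2 h0
      have := Int.self_sub_floor (β * x)
      linarith
    have h2 := ih (x := Tbeta β x) (Int.fract_nonneg _)
    have : β ^ n * Tbeta β x ≤ β ^ n * (β * x) := mul_le_mul_of_nonneg_left h1 (by positivity)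
    rw [pow_succ]; linarith

lemma aux_shift {β : ℝ} (hβ : 1 < β) (n : ℕ) : ∀ {x u : ℝ}, 0 ≤ x → 0 ≤ u →
    u ≤ (Tbeta β)^[n] x → (Tbeta β)^[n] (x - u / β ^ n) = (Tbeta β)^[n] x - u := by
  induction n with
  | zero => intro x u _ _ _; simp
  | succ n ih =>
    intro x u hx hu hux
    rw [Function.iterate_succ_apply] at hux
    rw [Function.iterate_succ_apply, Function.iterate_succ_apply]
    have hT0 : 0 ≤ Tbeta β x := Int.fract_nonneg _
    have hT1 : Tbeta β x < 1 := Int.fract_lt_one _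
    have hb : 0 < β ^ n := by positivity
    have h1 : u / β ^ n ≤ Tbeta β x := by
      rw [div_le_iff₀ hb]
      have := aux_T_le hβ n hT0
      linarith
    have h1' : 0 ≤ u / β ^ n := by positivity
    have h2 : Tbeta β (x - u / β ^ (n + 1)) = Tbeta β x - u / β ^ n := by
      have h3 : Tbeta β (x - u / β ^ (n + 1)) = Int.fract (β * (x - u / β ^ (n + 1))) := rfl
      rw [h3, Int.fract_eq_iff]
      refine ⟨by linarith, by linarith, ⌊β * x⌋, ?_⟩
      unfold Tbeta
      rw [← Int.self_sub_floor (β * x), pow_succ]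
      field_simp
      ring
    rw [h2, ih hT0 hu hux]

lemma aux_null {β : ℝ} (hβ : 1 < β) {a : ℝ} (ha : 0 < a) : volume (Kset β a) = 0 := by
  set K := Kset β a with hK
  by_contra hne
  obtain ⟨x, hxK, hx⟩ := Measure.exists_mem_of_measure_ne_zero_of_ae hne
    (Besicovitch.ae_tendsto_measure_inter_div (volume : Measure ℝ) K)
  have hb0 : 0 < β := by linarith
  have hr : Tendsto (fun n : ℕ => (1 / β) ^ n) atTop (nhdsWithin 0 (Set.Ioi 0)) := by
    refine tendsto_nhdsWithin_iff.2 ⟨tendsto_pow_atTop_nhds_zero_of_lt_one (by positivity)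
      (by rw [div_lt_one hb0]; exact hβ), Eventually.of_forall fun n => ?_⟩
    exact Set.mem_Ioi.2 (by positivity)
  have hc := hx.comp hr
  have hle : (1 : ENNReal) ≤ ENNReal.ofReal (1 - a / 2) := by
    refine le_of_tendsto hc (Eventually.of_forall fun n => ?_)
    simp only [Function.comp]
    set r : ℝ := (1 / β) ^ n with hrdef
    have hr0 : 0 < r := by positivity
    have hrb : ∀ u : ℝ, u / β ^ n = u * r := by
      intro u; rw [hrdef, div_pow, one_pow]; ring
    set y := (Tbeta β)^[n] x with hy
    have hya : a ≤ y := hxK.2 n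
    have hy1 : y < 1 := (aux_iter_mem hxK.1 n).2
    set J : Set ℝ := Set.Ioo (x - y * r) (x - (y - a) * r) with hJ
    have hJvol : volume J = ENNReal.ofReal (a * r) := by
      rw [hJ, Real.volume_Ioo]; congr 1; ring
    have hJsub : J ⊆ Metric.closedBall x r := by
      intro z hz
      rw [Real.closedBall_eq_Icc]
      constructor <;> nlinarith [hz.1, hz.2]
    have hdis : K ∩ Metric.closedBall x r ⊆ Metric.closedBall x r \ J := by
      rintro z ⟨hzK, hzb⟩
      refine ⟨hzb, fun hz => ?_⟩
      have hu := aux_shift hβ n (x := x) (u := (x - z) / r) hxK.1.1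
        (by apply div_nonneg _ hr0.le; nlinarith [hz.2])
        (by rw [div_le_iff₀ hr0, ← hy]; linarith [hz.1])
      rw [hrb, div_mul_cancel₀ _ hr0.ne', sub_sub_cancel, ← hy] at hu
      have h1 := hzK.2 n
      rw [hu] at h1
      have h2 : y - a < (x - z) / r := by rw [lt_div_iff₀ hr0]; linarith [hz.2]
      linarith
    have hvol : volume (Metric.closedBall x r) = ENNReal.ofReal (2 * r) := Real.volume_closedBall x r
    have hm : volume (K ∩ Metric.closedBall x r) ≤ ENNReal.ofReal ((1 - a / 2) * (2 * r)) := by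
      refine (measure_mono hdis).trans ?_
      rw [measure_sdiff hJsub measurableSet_Ioo.nullMeasurableSet
        (by rw [hJvol]; exact ENNReal.ofReal_ne_top), hvol, hJvol,
        ← ENNReal.ofReal_sub _ (by positivity)]
      apply ENNReal.ofReal_le_ofReal
      linarith
    rw [hvol]
    apply ENNReal.div_le_of_le_mul
    rwa [← ENNReal.ofReal_mul' (by positivity)]
  rw [← ENNReal.ofReal_one] at hle
  have := (ENNReal.ofReal_le_ofReal_iff' ).1 hle
  rcases this with h | h <;> linarith

end aux

/-- For a multinacci `β ∈ (1,2)`, the union of all β-Lyndon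
intervals has full Lebesgue measure in `[0, 1 - 1/β)`. -/
theorem stmt_10 (β : ℝ) (hβ : β ∈ Set.Ioo (1 : ℝ) 2) (hmulti : IsMultinacci β) :
    MeasureTheory.volume (Set.Ico (0 : ℝ) (1 - 1 / β) \ lyndonUnionIco β) = 0 := by
  obtain ⟨m, hm, hmul⟩ := hmulti
  have hb0 : 0 < β := by linarith [hβ.1]
  have hbinv : 0 < 1 / β := by positivity
  have hsub : Set.Ico (0 : ℝ) (1 - 1 / β) \ lyndonUnionIco β
      ⊆ {0} ∪ ⋃ j : ℕ, Kset β (1 / ((j : ℝ) + 1)) := by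
    rintro t ⟨ht, htU⟩
    have ht1 : t ∈ Set.Ico (0:ℝ) 1 := ⟨ht.1, by linarith [ht.2]⟩
    have hall : ∀ n, t ≤ (Tbeta β)^[n] t := by
      by_contra hc
      push Not at hc
      classical
      have hn := Nat.find_spec hc
      have hmin : ∀ k < Nat.find hc, t ≤ (Tbeta β)^[k] t :=
        fun k hk => not_lt.1 (Nat.find_min hc hk)
      have hn0 : Nat.find hc ≠ 0 := by
        intro h0
        rw [h0] at hn
        simp at hn
      apply htU
      unfold lyndonUnionIco
      exact Set.mem_biUnion (aux_lyndon hβ hm hmul ht hn hmin) (aux_mem hβ ht1 hn0 hn)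
    rcases ht.1.eq_or_lt with h0 | h0
    · left; exact h0.symm
    · right
      obtain ⟨j, hj⟩ := exists_nat_one_div_lt h0
      exact Set.mem_iUnion.2 ⟨j, ht1, fun n => hj.le.trans (hall n)⟩
  refine measure_mono_null hsub (measure_union_null (by simp) (measure_iUnion_null fun j => ?_))
  exact aux_null hβ.1 (by positivity)
end
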